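/- arXiv:0911.4941 — 3 statements merged into one kernel-verified Lean document; each statement's English description precedes it below -/
import Mathlib

section
/- Let p be a prime and n ≥ 1. The standard splitting φ(g) := Tr((x₁⋯xₙ)^{p−1}·g) is a Frobenius splitting of 𝔽_p[x₁,…,xₙ], and an ideal I of 𝔽_p[x₁,…,xₙ] is compatibly split by φ if and only if I is a squarefree monomial (Stanley–Reisner) ideal. -/
open MvPolynomial

/-- The near-splitting `Tr` on `𝔽_p[x₁,…,xₙ]`: on a monomial `∏ xᵢ^{eᵢ}` it gives
`∏ xᵢ^{(eᵢ+1)/p - 1}` if `p ∣ eᵢ + 1` for all `i`, and `0` otherwise, extended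
`𝔽_p`-linearly (note that `c^{1/p} = c` for `c ∈ 𝔽_p`). -/
noncomputable def Tr (p n : ℕ) (g : MvPolynomial (Fin n) (ZMod p)) :
    MvPolynomial (Fin n) (ZMod p) :=
  ∑ m ∈ g.support,
    if ∀ i, p ∣ (m i + 1) then
      monomial (Finsupp.equivFunOnFinite.symm fun i => (m i + 1) / p - 1) (g.coeff m)
    else 0

/-- A Frobenius splitting is an additive map `φ` with `φ (a^p * b) = a * φ b` and `φ 1 = 1`. -/
def IsFrobeniusSplitting (p : ℕ) {R : Type*} [CommRing R] (φ : R → R) : Prop :=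
  (∀ a b : R, φ (a + b) = φ a + φ b) ∧ (∀ a b : R, φ (a ^ p * b) = a * φ b) ∧ φ 1 = 1

/-- A squarefree monomial (Stanley–Reisner) ideal: one generated by a set of squarefree
monomials `∏_{i ∈ s} xᵢ`. -/
def IsSqfreeMonomialIdeal {R : Type*} [CommRing R] {n : ℕ}
    (I : Ideal (MvPolynomial (Fin n) R)) : Prop :=
  ∃ S : Set (Finset (Fin n)),
    I = Ideal.span ((fun s : Finset (Fin n) => ∏ i ∈ s, (X i : MvPolynomial (Fin n) R)) '' S)

/-!
Multiplying by `(x₁⋯xₙ)^{p-1}` before applying `Tr` cancels the shift of exponents in `Tr`: the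
standard splitting keeps the terms of `g` whose exponents are divisible by `p` and divides these
exponents by `p`. It is thus a left inverse of `xᵢ ↦ xᵢ^p`, linear over the image of that map, which
over `𝔽_p` is the Frobenius.

If `I` is stable under this operation, it is stable under the one with `q = p^e` in place of `p`.
Let `x^u` be a term of `g ∈ I` and `w` the indicator of its support. For `q` larger than all
exponents of `g`, the only term of `x^{qw-u} g` with all exponents divisible by `q` is the one
coming from `x^u`, so the squarefree monomial `x^w` lies in `I`. Conversely, membership in a
squarefree monomial ideal depends only on the supports of the exponent vectors, and these do not
change when exponents are divided by `p`.
-/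

section ContractExponents

variable {σ R : Type*} [CommSemiring R] {k : ℕ}

open scoped Classical in
/-- The polynomial obtained from `g` by keeping the terms with all exponents divisible by `k` and
dividing these exponents by `k`, the multivariate analogue of `Polynomial.contract`. It is
meaningful only for `k ≠ 0`; then every `m` with `k • m` in the support of `g` is in the index set,
and any other `m` contributes `0`. -/
noncomputable def contractExponents (k : ℕ) (g : MvPolynomial σ R) : MvPolynomial σ R :=
  ∑ m ∈ g.support.image (Finsupp.mapRange (· / k) (Nat.zero_div k)), monomial m (coeff (k • m) g)

theorem coeff_contractExponents (hk : k ≠ 0) (g : MvPolynomial σ R) (m : σ →₀ ℕ) :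
    coeff m (contractExponents k g) = coeff (k • m) g := by
  classical
  have mapRange_smul : Finsupp.mapRange (· / k) (Nat.zero_div k) (k • m) = m := by
    ext i
    simp [Nat.mul_div_cancel_left _ (Nat.pos_of_ne_zero hk)]
  simp only [contractExponents, coeff_sum, coeff_monomial, Finset.sum_ite_eq', ite_eq_left_iff]
  intro hm
  by_contra! h
  exact hm (Finset.mem_image.mpr ⟨k • m, mem_support_iff.mpr h.symm, mapRange_smul⟩)

theorem mem_support_contractExponents (hk : k ≠ 0) {g : MvPolynomial σ R} {m : σ →₀ ℕ} :
    m ∈ (contractExponents k g).support ↔ k • m ∈ g.support := by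
  rw [mem_support_iff, mem_support_iff, coeff_contractExponents hk]

theorem contractExponents_add (hk : k ≠ 0) (f g : MvPolynomial σ R) :
    contractExponents k (f + g) = contractExponents k f + contractExponents k g := by
  ext m
  simp only [coeff_contractExponents hk, coeff_add]

theorem contractExponents_expand_mul (hk : k ≠ 0) (f g : MvPolynomial σ R) :
    contractExponents k (expand k f * g) = f * contractExponents k g := by
  induction f using MvPolynomial.induction_on' with
  | monomial u c =>
    classical
    ext m
    have smul_le_smul : k • u ≤ k • m ↔ u ≤ m := by
      simp [Finsupp.le_def, Nat.pos_of_ne_zero hk]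
    have smul_tsub : k • m - k • u = k • (m - u) := by
      ext i
      simp [Nat.mul_sub]
    simp only [expand_monomial, coeff_contractExponents hk, coeff_monomial_mul', smul_le_smul,
      smul_tsub]
  | add f₁ f₂ ih₁ ih₂ => rw [map_add, add_mul, contractExponents_add hk, ih₁, ih₂, add_mul]

theorem contractExponents_expand (hk : k ≠ 0) (f : MvPolynomial σ R) :
    contractExponents k (expand k f) = f := by
  ext m
  rw [coeff_contractExponents hk, coeff_expand_smul k hk]

theorem contractExponents_iterate (hk : k ≠ 0) (e : ℕ) (g : MvPolynomial σ R) :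
    (contractExponents k)^[e] g = contractExponents (k ^ e) g := by
  induction e generalizing g with
  | zero => ext m; simp [coeff_contractExponents one_ne_zero]
  | succ e ih =>
    ext m
    rw [Function.iterate_succ_apply, ih, coeff_contractExponents (pow_ne_zero e hk),
      coeff_contractExponents hk, coeff_contractExponents (pow_ne_zero _ hk), smul_smul, pow_succ']

theorem eq_and_eq_of_add_smul_eq_add_smul {q : ℕ} {u v m w : σ →₀ ℕ} (hu : ∀ i, u i < q)
    (hv : ∀ i, v i < q) (h : u + q • m = v + q • w) : u = v ∧ m = w := by
  have hi (i : σ) : u i + q * m i = v i + q * w i := by simpa using DFunLike.congr_fun h i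
  have huv : u = v := by
    ext i
    simpa [Nat.mod_eq_of_lt, hu i, hv i] using congrArg (· % q) (hi i)
  subst huv
  refine ⟨rfl, Finsupp.ext fun i => ?_⟩
  exact Nat.eq_of_mul_eq_mul_left (Nat.zero_lt_of_lt (hu i)) (Nat.add_left_cancel (hi i))

theorem contractExponents_monomial_mul_of_degreeOf_lt {q : ℕ} (hq : q ≠ 0) {g : MvPolynomial σ R}
    (hg : ∀ i, degreeOf i g < q) {u w : σ →₀ ℕ} (hu : u ∈ g.support) (huw : u ≤ q • w) :
    contractExponents q (monomial (q • w - u) 1 * g) = monomial w (coeff u g) := by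
  classical
  have lt_of_mem {v : σ →₀ ℕ} (hv : v ∈ g.support) (i : σ) : v i < q :=
    (monomial_le_degreeOf i hv).trans_lt (hg i)
  ext m
  rw [coeff_contractExponents hq, coeff_monomial]
  split_ifs with hwm
  · rw [← hwm, coeff_monomial_mul', if_pos tsub_le_self, one_mul, tsub_tsub_cancel_of_le huw]
  · rw [coeff_monomial_mul', ite_eq_right_iff, one_mul]
    intro hle
    by_contra hv
    refine hwm (eq_and_eq_of_add_smul_eq_add_smul (lt_of_mem hu)
      (lt_of_mem (mem_support_iff.mpr hv)) ?_).2.symm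
    calc u + q • m = u + (q • w - u) + (q • m - (q • w - u)) := by
          rw [add_assoc, add_tsub_cancel_of_le hle]
      _ = q • m - (q • w - u) + q • w := by rw [add_tsub_cancel_of_le huw, add_comm]

theorem monomial_indicator_support_mem_of_contractExponents_mem (hk : 1 < k)
    {I : Ideal (MvPolynomial σ R)} (hI : ∀ g ∈ I, contractExponents k g ∈ I)
    {g : MvPolynomial σ R} (hg : g ∈ I) {u : σ →₀ ℕ} (hu : u ∈ g.support) :
    monomial (Finsupp.indicator u.support fun _ _ => 1) (coeff u g) ∈ I := by
  classical
  have hk0 : k ≠ 0 := Nat.ne_zero_of_lt hk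
  set q := k ^ g.totalDegree
  have hgq (i : σ) : degreeOf i g < q :=
    (degreeOf_le_totalDegree g i).trans_lt (Nat.lt_pow_self hk)
  have huw : u ≤ q • Finsupp.indicator u.support fun _ _ => 1 := by
    intro i
    by_cases hi : u i = 0
    · simp [hi]
    · simpa [hi] using (monomial_le_degreeOf i hu).trans (hgq i).le
  rw [← contractExponents_monomial_mul_of_degreeOf_lt (pow_ne_zero _ hk0) hgq hu huw,
    ← contractExponents_iterate hk0]
  exact Set.MapsTo.iterate hI _ (I.mul_mem_left _ hg)

end ContractExponents

section SquarefreeMonomialIdeals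

variable {σ R : Type*}

theorem prod_X_eq_monomial_indicator [CommSemiring R] (s : Finset σ) :
    ∏ i ∈ s, (X i : MvPolynomial σ R) = monomial (Finsupp.indicator s fun _ _ => 1) 1 := by
  simpa only [pow_one] using prod_X_pow (R := R) (fun _ => 1) s

theorem indicator_one_le_iff_subset_support {s : Finset σ} {u : σ →₀ ℕ} :
    (Finsupp.indicator s fun _ _ => 1) ≤ u ↔ s ⊆ u.support := by
  classical
  refine forall_congr' fun i => ?_
  by_cases hi : i ∈ s <;> simp [hi, Nat.one_le_iff_ne_zero]

theorem mem_span_prod_X_image_iff [CommSemiring R] {S : Set (Finset σ)} {g : MvPolynomial σ R} :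
    g ∈ Ideal.span ((fun s : Finset σ => ∏ i ∈ s, (X i : MvPolynomial σ R)) '' S) ↔
      ∀ u ∈ g.support, ∃ s ∈ S, s ⊆ u.support := by
  have image_eq : (fun s : Finset σ => ∏ i ∈ s, (X i : MvPolynomial σ R)) '' S =
      (fun u => monomial u 1) '' ((fun s => Finsupp.indicator s fun _ _ => 1) '' S) := by
    simp only [Set.image_image, prod_X_eq_monomial_indicator]
  simp only [image_eq, mem_ideal_span_monomial_image, Set.exists_mem_image,
    indicator_one_le_iff_subset_support]

theorem contractExponents_mem_span_prod_X_image [CommSemiring R] {k : ℕ} (hk : k ≠ 0)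
    {S : Set (Finset σ)} {g : MvPolynomial σ R}
    (hg : g ∈ Ideal.span ((fun s : Finset σ => ∏ i ∈ s, (X i : MvPolynomial σ R)) '' S)) :
    contractExponents k g ∈
      Ideal.span ((fun s : Finset σ => ∏ i ∈ s, (X i : MvPolynomial σ R)) '' S) := by
  rw [mem_span_prod_X_image_iff] at hg ⊢
  intro u hu
  simpa only [Finsupp.support_smul_eq hk] using hg _ ((mem_support_contractExponents hk).mp hu)

theorem eq_span_prod_X_image_of_contractExponents_mem {K : Type*} [Field K] {k : ℕ} (hk : 1 < k)
    {I : Ideal (MvPolynomial σ K)} (hI : ∀ g ∈ I, contractExponents k g ∈ I) :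
    I = Ideal.span ((fun s : Finset σ => ∏ i ∈ s, (X i : MvPolynomial σ K)) ''
      {s | ∏ i ∈ s, X i ∈ I}) := by
  refine le_antisymm (fun g hg => mem_span_prod_X_image_iff.mpr fun u hu => ?_) ?_
  · refine ⟨u.support, ?_, subset_rfl⟩
    have scaled_mem := I.mul_mem_left (C (coeff u g)⁻¹)
      (monomial_indicator_support_mem_of_contractExponents_mem hk hI hg hu)
    rwa [C_mul_monomial, inv_mul_cancel₀ (mem_support_iff.mp hu),
      ← prod_X_eq_monomial_indicator] at scaled_mem
  · exact Ideal.span_le.mpr (Set.image_subset_iff.mpr fun _ hs => hs)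

theorem forall_contractExponents_mem_iff_isSqfreeMonomialIdeal {K : Type*} [Field K] {k n : ℕ}
    (hk : 1 < k) {I : Ideal (MvPolynomial (Fin n) K)} :
    (∀ g ∈ I, contractExponents k g ∈ I) ↔ IsSqfreeMonomialIdeal I := by
  constructor
  · exact fun hI => ⟨_, eq_span_prod_X_image_of_contractExponents_mem hk hI⟩
  · rintro ⟨S, rfl⟩ g hg
    exact contractExponents_mem_span_prod_X_image (Nat.ne_zero_of_lt hk) hg

end SquarefreeMonomialIdeals

section StandardSplitting

variable {p n : ℕ}

theorem dvd_add_one_and_div_sub_one_eq_iff (hp : p ≠ 0) {a b : ℕ} :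
    p ∣ a + 1 ∧ (a + 1) / p - 1 = b ↔ a = p * b + (p - 1) := by
  have hp_pos := Nat.pos_of_ne_zero hp
  constructor
  · rintro ⟨⟨_ | c, hc⟩, rfl⟩
    · simp at hc
    · rw [hc, Nat.mul_div_cancel_left _ hp_pos, Nat.add_sub_cancel]
      rw [mul_add_one] at hc
      lia
  · rintro rfl
    have add_one_eq : p * b + (p - 1) + 1 = p * (b + 1) := by rw [mul_add_one]; lia
    rw [add_one_eq, Nat.mul_div_cancel_left _ hp_pos]
    exact ⟨dvd_mul_right p _, Nat.add_sub_cancel ..⟩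

theorem coeff_Tr (hp : p ≠ 0) (g : MvPolynomial (Fin n) (ZMod p)) (m : Fin n →₀ ℕ) :
    coeff m (Tr p n g) =
      coeff (p • m + Finsupp.indicator Finset.univ fun _ _ => p - 1) g := by
  have exponent_iff (u : Fin n →₀ ℕ) :
      ((∀ i, p ∣ u i + 1) ∧ Finsupp.equivFunOnFinite.symm (fun i => (u i + 1) / p - 1) = m) ↔
        u = p • m + Finsupp.indicator Finset.univ fun _ _ => p - 1 := by
    simp [Finsupp.ext_iff, ← forall_and, dvd_add_one_and_div_sub_one_eq_iff hp]
  simp only [Tr, coeff_sum, apply_ite (coeff m), coeff_monomial, coeff_zero, ← ite_and,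
    exponent_iff, Finset.sum_ite_eq', ite_eq_left_iff]
  exact fun h => (notMem_support_iff.mp h).symm

theorem Tr_prod_X_pow_mul (hp : p ≠ 0) (g : MvPolynomial (Fin n) (ZMod p)) :
    Tr p n ((∏ i, X i) ^ (p - 1) * g) = contractExponents p g := by
  ext m
  rw [coeff_Tr hp, coeff_contractExponents hp, ← Finset.prod_pow,
    prod_X_pow (fun _ => p - 1), add_comm, coeff_monomial_mul, one_mul]

theorem isFrobeniusSplitting_contractExponents {σ : Type*} [Fact p.Prime] :
    IsFrobeniusSplitting p (contractExponents p : MvPolynomial σ (ZMod p) → _) := by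
  have hp : p ≠ 0 := NeZero.ne p
  refine ⟨contractExponents_add hp, fun a b => ?_, ?_⟩
  · rw [← expand_zmod, contractExponents_expand_mul hp]
  · rw [← map_one (expand p), contractExponents_expand hp, map_one]

end StandardSplitting

/-- the standard splitting `g ↦ Tr((x₁⋯xₙ)^{p-1}·g)` is a Frobenius splitting
of `𝔽_p[x₁,…,xₙ]`, and an ideal is compatibly split by it iff it is a squarefree monomial
(Stanley–Reisner) ideal. -/
theorem stmt_7 {p : ℕ} (hp : p.Prime) {n : ℕ} (hn : 1 ≤ n) :
    IsFrobeniusSplitting p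
        (fun g => Tr p n ((∏ i, (X i : MvPolynomial (Fin n) (ZMod p))) ^ (p - 1) * g)) ∧
      ∀ I : Ideal (MvPolynomial (Fin n) (ZMod p)),
        (∀ g ∈ I, Tr p n ((∏ i, (X i : MvPolynomial (Fin n) (ZMod p))) ^ (p - 1) * g) ∈ I)
          ↔ IsSqfreeMonomialIdeal I := by
  have : Fact p.Prime := ⟨hp⟩
  simp only [Tr_prod_X_pow_mul hp.ne_zero]
  exact ⟨isFrobeniusSplitting_contractExponents,
    fun _ => forall_contractExponents_mem_iff_isSqfreeMonomialIdeal hp.one_lt⟩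
end

section
/- Let p be a prime, n > 0, m ≥ 1, and f₁,…,f_m ∈ 𝔽_p[x₁,…,xₙ] nonconstant polynomials (each of total degree > 0) such that f := ∏ᵢ₌₁^m fᵢ has total degree at most n. Then the number of points v ∈ 𝔽_pⁿ with f₁(v) = f₂(v) = ⋯ = f_m(v) = 0 is congruent modulo p to (−1)^{n−m}·c, where c ∈ 𝔽_p is the coefficient of the monomial ∏ᵢ₌₁ⁿ xᵢ^{p−1} in f^{p−1}. -/
open MvPolynomial

/-!
Over a field with `q` elements, `1 - a ^ (q - 1)` is the indicator of `a = 0`, so the number of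
common zeros of the `fᵢ` is the sum of the values of `∏ᵢ (1 - fᵢ ^ (q - 1))`. A power sum
`∑ₐ a ^ k` vanishes for `k < q - 1` and is `-1` for `k = q - 1`; hence summing the values of a
polynomial of degree at most `n (q - 1)` picks out `(-1) ^ n` times the coefficient of
`∏ⱼ xⱼ ^ (q - 1)`. When the product is expanded, only the term `(-1) ^ m ∏ᵢ fᵢ ^ (q - 1)` has large
enough degree to contribute to that coefficient, because each `fᵢ` has positive degree.
-/

section Exponents

variable {σ : Type*}

lemma exists_lt_of_degree_le_of_ne {d e : σ →₀ ℕ} (hdeg : d.degree ≤ e.degree) (hne : d ≠ e) :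
    ∃ i, d i < e i := by
  by_contra! hle
  obtain ⟨c, rfl⟩ := exists_add_of_le (show e ≤ d from hle)
  have hc : c = 0 := by
    rw [← Finsupp.degree_eq_zero_iff]
    rw [map_add] at hdeg
    lia
  exact hne (by rw [hc, add_zero])

lemma degree_equivFunOnFinite_symm_const [Fintype σ] (k : ℕ) :
    (Finsupp.equivFunOnFinite.symm fun _ : σ => k).degree = k * Fintype.card σ := by
  simp [Finsupp.degree_eq_sum, mul_comm]

end Exponents

section Polynomials

variable {σ ι R : Type*}

lemma sum_eval_eq_sum_coeff_mul_prod_sum_pow [CommSemiring R] [Fintype R] [Fintype σ]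
    [DecidableEq σ] (g : MvPolynomial σ R) :
    ∑ x, eval x g = ∑ d ∈ g.support, g.coeff d * ∏ i, ∑ a : R, a ^ d i := by
  simp only [eval_eq', Finset.prod_univ_sum, Fintype.piFinset_univ, Finset.mul_sum]
  exact Finset.sum_comm

lemma totalDegree_finsetProd_of_noZeroDivisors [CommSemiring R] [NoZeroDivisors R]
    {s : Finset ι} {g : ι → MvPolynomial σ R} (hg : ∀ i ∈ s, g i ≠ 0) :
    (∏ i ∈ s, g i).totalDegree = ∑ i ∈ s, (g i).totalDegree := by
  induction s using Finset.cons_induction with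
  | empty => simp
  | cons a s ha ih =>
    rw [Finset.forall_mem_cons] at hg
    have := nontrivial_of_ne _ _ hg.1
    rw [Finset.prod_cons, Finset.sum_cons,
      totalDegree_mul_of_isDomain hg.1 (Finset.prod_ne_zero_iff.mpr hg.2), ih hg.2]

lemma totalDegree_pow_of_noZeroDivisors [CommSemiring R] [NoZeroDivisors R]
    (g : MvPolynomial σ R) (k : ℕ) : (g ^ k).totalDegree = k * g.totalDegree := by
  obtain rfl | hg := eq_or_ne g 0
  · obtain rfl | hk := eq_or_ne k 0
    · simp
    · simp [zero_pow hk]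
  · simpa using totalDegree_finsetProd_of_noZeroDivisors (s := Finset.range k) fun _ _ => hg

lemma coeff_prod_one_sub_of_sum_totalDegree_le [CommRing R] {s : Finset ι}
    {g : ι → MvPolynomial σ R} {d : σ →₀ ℕ} (hpos : ∀ i ∈ s, 0 < (g i).totalDegree)
    (hdeg : ∑ i ∈ s, (g i).totalDegree ≤ d.degree) :
    (∏ i ∈ s, (1 - g i)).coeff d = (-1) ^ s.card * (∏ i ∈ s, g i).coeff d := by
  classical
  have coeff_eq_zero : ∀ t ∈ s.powerset, t ≠ s → (∏ i ∈ t, -g i).coeff d = 0 := by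
    intro t ht hts
    obtain ⟨j, hjs, hjt⟩ := Finset.exists_of_ssubset ((Finset.mem_powerset.mp ht).ssubset_of_ne hts)
    apply coeff_eq_zero_of_totalDegree_lt
    calc (∏ i ∈ t, -g i).totalDegree
        ≤ ∑ i ∈ t, (-g i).totalDegree := totalDegree_finsetProd _ _
      _ = ∑ i ∈ t, (g i).totalDegree := by simp only [totalDegree_neg]
      _ < ∑ i ∈ s, (g i).totalDegree :=
        Finset.sum_lt_sum_of_subset (Finset.mem_powerset.mp ht) hjs hjt (hpos j hjs) (by simp)
      _ ≤ ∑ i ∈ d.support, d i := hdeg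
  have coeff_prod_neg : (∏ i ∈ s, -g i).coeff d = (-1) ^ s.card * (∏ i ∈ s, g i).coeff d := by
    rw [Finset.prod_neg, ← coeff_C_mul]
    simp
  simp only [sub_eq_add_neg, Finset.prod_one_add, coeff_sum]
  rw [Finset.sum_eq_single_of_mem s (Finset.mem_powerset_self s) coeff_eq_zero, coeff_prod_neg]

end Polynomials

section FiniteField

variable {K σ ι : Type*} [Field K] [Fintype K]

local notation "q" => Fintype.card K

lemma one_sub_pow_card_sub_one_eq_ite [DecidableEq K] (a : K) :
    1 - a ^ (q - 1) = if a = 0 then 1 else 0 := by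
  split_ifs with ha
  · rw [ha, zero_pow (Nat.sub_pos_of_lt Fintype.one_lt_card).ne', sub_zero]
  · rw [FiniteField.pow_card_sub_one_eq_one a ha, sub_self]

lemma sum_pow_card_sub_one_eq_neg_one : ∑ a : K, a ^ (q - 1) = -1 := by
  classical
  have sum_indicator : ∑ a : K, (1 - a ^ (q - 1)) = 1 := by
    simp [one_sub_pow_card_sub_one_eq_ite]
  rw [Finset.sum_sub_distrib, Finset.sum_const, Finset.card_univ, nsmul_one,
    FiniteField.cast_card_eq_zero, zero_sub] at sum_indicator
  exact neg_eq_iff_eq_neg.mp sum_indicator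

variable [Fintype σ]

lemma sum_eval_eq_neg_one_pow_mul_coeff [DecidableEq σ] {g : MvPolynomial σ K}
    (hdeg : g.totalDegree ≤ (q - 1) * Fintype.card σ) :
    ∑ x, eval x g = (-1) ^ Fintype.card σ *
      g.coeff (Finsupp.equivFunOnFinite.symm fun _ => q - 1) := by
  set e : σ →₀ ℕ := Finsupp.equivFunOnFinite.symm fun _ => q - 1 with he
  have prod_sum_pow_eq_zero : ∀ d ∈ g.support, d ≠ e → ∏ i, ∑ a : K, a ^ d i = 0 := by
    intro d hd hde
    have hdeg' : d.degree ≤ e.degree := by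
      rw [he, degree_equivFunOnFinite_symm_const]
      exact (le_totalDegree hd).trans hdeg
    obtain ⟨i, hi⟩ := exists_lt_of_degree_le_of_ne hdeg' hde
    exact Finset.prod_eq_zero (Finset.mem_univ i) (FiniteField.sum_pow_lt_card_sub_one K _ hi)
  calc ∑ x, eval x g
      = ∑ d ∈ g.support, g.coeff d * ∏ i, ∑ a : K, a ^ d i :=
        sum_eval_eq_sum_coeff_mul_prod_sum_pow g
    _ = g.coeff e * ∏ i, ∑ a : K, a ^ e i :=
        Finset.sum_eq_single e
          (fun d hd hde => by rw [prod_sum_pow_eq_zero d hd hde, mul_zero])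
          (fun h => by rw [notMem_support_iff.mp h, zero_mul])
    _ = (-1) ^ Fintype.card σ * g.coeff e := by
        simp [he, sum_pow_card_sub_one_eq_neg_one, mul_comm]

variable [Fintype ι]

lemma natCast_card_zeros_eq_sum_eval [DecidableEq σ] (fs : ι → MvPolynomial σ K) :
    (Nat.card {v : σ → K // ∀ i, eval v (fs i) = 0} : K) =
      ∑ x, eval x (∏ i, (1 - fs i ^ (q - 1))) := by
  classical
  simp only [map_prod, map_sub, map_one, map_pow, one_sub_pow_card_sub_one_eq_ite,
    Fintype.prod_boole, Finset.sum_boole, Nat.card_eq_fintype_card, Fintype.card_subtype]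

theorem stmt_10_general (fs : ι → MvPolynomial σ K) (hfs : ∀ i, 0 < (fs i).totalDegree)
    (hdeg : (∏ i, fs i).totalDegree ≤ Fintype.card σ) :
    (Nat.card {v : σ → K // ∀ i, eval v (fs i) = 0} : K) =
      (-1) ^ (Fintype.card σ - Fintype.card ι) *
        ((∏ i, fs i) ^ (q - 1)).coeff (Finsupp.equivFunOnFinite.symm fun _ => q - 1) := by
  classical
  have hsum : ∑ i, (fs i).totalDegree ≤ Fintype.card σ := by
    rwa [← totalDegree_finsetProd_of_noZeroDivisors fun i _ h => by simpa [h] using hfs i]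
  have hcard : Fintype.card ι ≤ Fintype.card σ := by
    grw [← hsum, Fintype.card_eq_sum_ones]
    exact Finset.sum_le_sum fun i _ => hfs i
  have hpos (i : ι) : 0 < (fs i ^ (q - 1)).totalDegree := by
    rw [totalDegree_pow_of_noZeroDivisors]
    exact Nat.mul_pos (Nat.sub_pos_of_lt Fintype.one_lt_card) (hfs i)
  have hpow : ∑ i, (fs i ^ (q - 1)).totalDegree ≤ (q - 1) * Fintype.card σ := by
    simp only [totalDegree_pow_of_noZeroDivisors, ← Finset.mul_sum]
    grw [hsum]
  have hindicator : (∏ i, (1 - fs i ^ (q - 1))).totalDegree ≤ (q - 1) * Fintype.card σ := by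
    grw [totalDegree_finsetProd, ← hpow]
    exact Finset.sum_le_sum fun i _ => (totalDegree_sub _ _).trans_eq (by simp)
  rw [natCast_card_zeros_eq_sum_eval, sum_eval_eq_neg_one_pow_mul_coeff hindicator,
    coeff_prod_one_sub_of_sum_totalDegree_le (fun i _ => hpos i)
      (hpow.trans_eq (degree_equivFunOnFinite_symm_const _).symm),
    Finset.prod_pow, Finset.card_univ, ← mul_assoc, ← pow_add]
  congr 1
  exact neg_one_pow_congr (by rw [Nat.even_sub hcard, Nat.even_add])

end FiniteField

/-- for nonconstant `f₁,…,f_m ∈ 𝔽_p[x₁,…,xₙ]` whose product `f` has total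
degree at most `n > 0`, the number of common zeros `v ∈ 𝔽_pⁿ` of `f₁,…,f_m` is congruent
mod `p` to `(−1)^{n−m}·c`, where `c` is the coefficient of `∏ᵢ xᵢ^{p−1}` in `f^{p−1}`. -/
theorem stmt_10 {p : ℕ} (hp : p.Prime) {n : ℕ} (hn : 0 < n) {m : ℕ} (hm : 1 ≤ m)
    (fs : Fin m → MvPolynomial (Fin n) (ZMod p))
    (hfs : ∀ i, 0 < (fs i).totalDegree)
    (hdeg : (∏ i, fs i).totalDegree ≤ n) :
    (Nat.card {v : Fin n → ZMod p // ∀ i, eval v (fs i) = 0} : ZMod p) =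
      (-1) ^ (n - m) *
        ((∏ i, fs i) ^ (p - 1)).coeff
          (Finsupp.equivFunOnFinite.symm fun _ : Fin n => p - 1) := by
  have : Fact p.Prime := ⟨hp⟩
  simpa [ZMod.card] using stmt_10_general fs hfs (by simpa using hdeg)
end

section
/- Let p be a prime, n ≥ 1, and f ∈ 𝔽_p[x₁,…,xₙ] a polynomial of total degree at most n. Let λ be a weighting such that x₁⋯xₙ appears in init_λ(f), and assume Tr(f^{p−1}) = 1 (equivalently, Tr((init_λ f)^{p−1}) = 1), so that g ↦ Tr(f^{p−1}·g) and g ↦ Tr((init_λ f)^{p−1}·g) are both Frobenius splittings of 𝔽_p[x₁,…,xₙ]. If an ideal I is compatibly split by g ↦ Tr(f^{p−1}·g), then the initial ideal init_λ(I) is compatibly split by g ↦ Tr((init_λ f)^{p−1}·g). -/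
open MvPolynomial

/-- The `λ`-weight of an exponent vector `m` is `∑ᵢ λᵢ·mᵢ`. -/
def wtOf {n : ℕ} (lam : Fin n → ℕ) (m : Fin n →₀ ℕ) : ℕ := ∑ i, lam i * m i

/-- The leading form `init_λ(g)`: the sum of the terms of `g` of maximal `λ`-weight. -/
noncomputable def initForm {R : Type*} [CommRing R] {n : ℕ} (lam : Fin n → ℕ)
    (g : MvPolynomial (Fin n) R) : MvPolynomial (Fin n) R :=
  ∑ m ∈ g.support.filter (fun m => ∀ m' ∈ g.support, wtOf lam m' ≤ wtOf lam m),
    MvPolynomial.monomial m (g.coeff m)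

/-- The initial ideal `init_λ(I)`, spanned by the leading forms of the nonzero
elements of `I`. -/
noncomputable def initIdeal {R : Type*} [CommRing R] {n : ℕ} (lam : Fin n → ℕ)
    (I : Ideal (MvPolynomial (Fin n) R)) : Ideal (MvPolynomial (Fin n) R) :=
  Ideal.span {h | ∃ g ∈ I, g ≠ 0 ∧ initForm lam g = h}

/-!
Write `Λ = ∑ᵢ λᵢ`. The coefficient of `x^k` in `Tr g` is the coefficient in `g` of the monomial
with exponent `p·k + (p-1)·(1,…,1)`, whose weight is `p·wt(k) + (p-1)·Λ`. As this is strictly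
increasing in `wt(k)`, `Tr` carries the top-weight part of `g` to the part of `Tr g` of the highest
possible weight, or kills it when its weight is not of the form `p·d + (p-1)·Λ`. In both cases
`Tr g ∈ I` implies that `Tr` of the top-weight part of `g` lies in `init_λ(I)`. Apply this to
`f^{p-1}·g` with `g ∈ I`: taking the part of the highest possible weight is multiplicative, even
when that part vanishes, and such parts of elements of `I` generate `init_λ(I)` additively.
-/

section WeightedDegree

variable {σ R M : Type*} [CommSemiring R] [AddCommMonoid M] [SemilatticeSup M] [OrderBot M]
  {w : σ → M} {φ ψ : MvPolynomial σ R} {m n : M}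

theorem weightedTotalDegree_le_iff :
    weightedTotalDegree w φ ≤ m ↔ ∀ d, coeff d φ ≠ 0 → Finsupp.weight w d ≤ m := by
  simp only [weightedTotalDegree, Finset.sup_le_iff, mem_support_iff]

theorem weightedTotalDegree_monomial_le (d : σ →₀ ℕ) (r : R) :
    weightedTotalDegree w (monomial d r) ≤ Finsupp.weight w d := by
  classical
  refine weightedTotalDegree_le_iff.2 fun e he => ?_
  rw [coeff_monomial] at he
  rw [(ite_ne_right_iff.1 he).1]

theorem weightedTotalDegree_mul_le [IsOrderedAddMonoid M] :
    weightedTotalDegree w (φ * ψ) ≤ weightedTotalDegree w φ + weightedTotalDegree w ψ := by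
  classical
  refine Finset.sup_le fun d hd => ?_
  obtain ⟨a, ha, b, hb, rfl⟩ := Finset.mem_add.1 (support_mul φ ψ hd)
  rw [map_add]
  exact add_le_add (le_weightedTotalDegree w ha) (le_weightedTotalDegree w hb)

theorem weightedTotalDegree_pow_le [IsOrderedAddMonoid M] (k : ℕ) :
    weightedTotalDegree w (φ ^ k) ≤ k • weightedTotalDegree w φ := by
  induction k with
  | zero =>
    rw [pow_zero, zero_nsmul, ← map_zero (Finsupp.weight (R := ℕ) w)]
    exact weightedTotalDegree_monomial_le 0 1
  | succ k ih =>
    rw [pow_succ, succ_nsmul]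
    exact weightedTotalDegree_mul_le.trans (add_le_add_left ih _)

theorem weightedHomogeneousComponent_mul_of_le [IsOrderedCancelAddMonoid M]
    (hφ : weightedTotalDegree w φ ≤ m) (hψ : weightedTotalDegree w ψ ≤ n) :
    weightedHomogeneousComponent w (m + n) (φ * ψ) =
      weightedHomogeneousComponent w m φ * weightedHomogeneousComponent w n ψ := by
  classical
  ext d
  simp only [coeff_weightedHomogeneousComponent, coeff_mul, ite_zero_mul_ite_zero,
    Finset.ite_sum_zero]
  refine Finset.sum_congr rfl fun x hx => ?_
  by_cases hzero : coeff x.1 φ * coeff x.2 ψ = 0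
  · simp only [hzero, ite_self]
  have hle₁ := weightedTotalDegree_le_iff.1 hφ _ (left_ne_zero_of_mul hzero)
  have hle₂ := weightedTotalDegree_le_iff.1 hψ _ (right_ne_zero_of_mul hzero)
  rw [← Finset.HasAntidiagonal.mem_antidiagonal.1 hx, map_add]
  simp only [add_eq_add_iff_eq_and_eq hle₁ hle₂]

theorem weightedHomogeneousComponent_pow_of_le [IsOrderedCancelAddMonoid M]
    (hφ : weightedTotalDegree w φ ≤ m) (k : ℕ) :
    weightedHomogeneousComponent w (k • m) (φ ^ k) = weightedHomogeneousComponent w m φ ^ k := by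
  induction k with
  | zero =>
    rw [pow_zero, pow_zero, zero_nsmul]
    exact weightedHomogeneousComponent_eq_self (isWeightedHomogeneous_one R w)
  | succ k ih =>
    have hpow : weightedTotalDegree w (φ ^ k) ≤ k • m :=
      (weightedTotalDegree_pow_le k).trans (nsmul_le_nsmul_right hφ k)
    rw [pow_succ, pow_succ, succ_nsmul, weightedHomogeneousComponent_mul_of_le hpow hφ, ih]

end WeightedDegree

section InitialIdeal

variable {R : Type*} [CommRing R] {n : ℕ} {lam : Fin n → ℕ}

theorem wtOf_eq_weight (m : Fin n →₀ ℕ) : wtOf lam m = Finsupp.weight lam m := by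
  simp only [wtOf, Finsupp.weight_eq_sum, smul_eq_mul, mul_comm]

theorem initForm_eq_weightedHomogeneousComponent (g : MvPolynomial (Fin n) R) :
    initForm lam g = weightedHomogeneousComponent lam (weightedTotalDegree lam g) g := by
  classical
  rw [initForm, weightedHomogeneousComponent_apply]
  refine Finset.sum_congr (Finset.filter_congr fun m hm => ?_) fun _ _ => rfl
  simp only [wtOf_eq_weight]
  rw [← Finset.sup_le_iff]
  exact (le_weightedTotalDegree lam hm).ge_iff_eq

theorem weightedHomogeneousComponent_mem_initIdeal {I : Ideal (MvPolynomial (Fin n) R)}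
    {g : MvPolynomial (Fin n) R} {d : ℕ} (hg : g ∈ I) (hd : weightedTotalDegree lam g ≤ d) :
    weightedHomogeneousComponent lam d g ∈ initIdeal lam I := by
  obtain hlt | rfl := hd.lt_or_eq
  · rw [weightedHomogeneousComponent_eq_zero d g hlt]
    exact zero_mem _
  · rw [← initForm_eq_weightedHomogeneousComponent]
    obtain rfl | hne := eq_or_ne g 0
    · simp [initForm]
    · exact Ideal.subset_span ⟨g, hg, hne, rfl⟩

theorem initIdeal_induction_on {I : Ideal (MvPolynomial (Fin n) R)}
    {motive : MvPolynomial (Fin n) R → Prop} {h : MvPolynomial (Fin n) R}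
    (hh : h ∈ initIdeal lam I) (zero : motive 0)
    (add : ∀ a b, motive a → motive b → motive (a + b))
    (component : ∀ g ∈ I, ∀ d, weightedTotalDegree lam g ≤ d →
      motive (weightedHomogeneousComponent lam d g)) :
    motive h := by
  rw [initIdeal] at hh
  induction hh using Submodule.closure_induction with
  | zero => exact zero
  | add a b _ _ ha hb => exact add a b ha hb
  | smul_mem a _ hx =>
    obtain ⟨g, hg, -, rfl⟩ := hx
    rw [smul_eq_mul, initForm_eq_weightedHomogeneousComponent]
    induction a using MvPolynomial.induction_on' with
    | monomial u c =>
      have hu : weightedTotalDegree lam (monomial u c) ≤ Finsupp.weight lam u :=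
        weightedTotalDegree_monomial_le u c
      rw [← weightedHomogeneousComponent_eq_self (isWeightedHomogeneous_monomial lam u c rfl),
        ← weightedHomogeneousComponent_mul_of_le hu le_rfl]
      exact component _ (I.mul_mem_left _ hg) _
        (weightedTotalDegree_mul_le.trans (add_le_add_left hu _))
    | add a b ha hb =>
      rw [add_mul]
      exact add _ _ ha hb

end InitialIdeal

section Trace

variable {p n : ℕ} {lam : Fin n → ℕ}

/-- The exponent of the unique monomial that `Tr` sends to `x^k`, for `p ≠ 0`. The form
`p·k + (p-1)·(1,…,1)` of `p·(k+1) - 1` makes its weight computable by linearity. -/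
noncomputable def traceExponent (p : ℕ) (k : Fin n →₀ ℕ) : Fin n →₀ ℕ :=
  p • k + (p - 1) • Finsupp.equivFunOnFinite.symm 1

theorem weight_traceExponent (k : Fin n →₀ ℕ) :
    Finsupp.weight lam (traceExponent p k) = p * Finsupp.weight lam k + (p - 1) * ∑ i, lam i := by
  have hone : Finsupp.weight lam (Finsupp.equivFunOnFinite.symm (1 : Fin n → ℕ)) = ∑ i, lam i := by
    simp [Finsupp.weight_eq_sum]
  rw [traceExponent, map_add, map_nsmul, map_nsmul, hone, smul_eq_mul, smul_eq_mul]

variable [NeZero p]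

theorem traceExponent_apply_add_one (k : Fin n →₀ ℕ) (i : Fin n) :
    traceExponent p k i + 1 = p * (k i + 1) := by
  have hp : p - 1 + 1 = p := Nat.sub_add_cancel NeZero.one_le
  simp [traceExponent, mul_add, add_assoc, hp]

theorem eq_traceExponent_iff {m k : Fin n →₀ ℕ} :
    m = traceExponent p k ↔ (∀ i, p ∣ m i + 1) ∧
      Finsupp.equivFunOnFinite.symm (fun i => (m i + 1) / p - 1) = k := by
  constructor
  · rintro rfl
    refine ⟨fun i => ⟨_, traceExponent_apply_add_one k i⟩, Finsupp.ext fun i => ?_⟩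
    rw [Finsupp.coe_equivFunOnFinite_symm, traceExponent_apply_add_one,
      Nat.mul_div_cancel_left _ (NeZero.pos p), Nat.add_sub_cancel]
  · rintro ⟨hdvd, rfl⟩
    ext i
    have hpos : 0 < (m i + 1) / p :=
      Nat.div_pos (Nat.le_of_dvd (Nat.succ_pos _) (hdvd i)) (NeZero.pos p)
    refine Nat.add_right_cancel (m := 1) ?_
    rw [traceExponent_apply_add_one, Finsupp.coe_equivFunOnFinite_symm, Nat.sub_add_cancel hpos,
      Nat.mul_div_cancel' (hdvd i)]

theorem coeff_Tr_s14 (g : MvPolynomial (Fin n) (ZMod p)) (k : Fin n →₀ ℕ) :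
    coeff k (Tr p n g) = coeff (traceExponent p k) g := by
  classical
  have hterm (m : Fin n →₀ ℕ) :
      coeff k (if ∀ i, p ∣ m i + 1 then
        monomial (Finsupp.equivFunOnFinite.symm fun i => (m i + 1) / p - 1) (coeff m g) else 0) =
      if m = traceExponent p k then coeff m g else 0 := by
    simp only [eq_traceExponent_iff, ite_and, apply_ite (coeff k), coeff_monomial, coeff_zero]
  simp only [Tr, coeff_sum, hterm, Finset.sum_ite_eq', mem_support_iff, ite_not, ite_eq_right_iff]
  exact fun h => h.symm

theorem Tr_zero : Tr p n 0 = 0 := by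
  ext k
  simp only [coeff_Tr_s14, coeff_zero]

theorem Tr_add (a b : MvPolynomial (Fin n) (ZMod p)) : Tr p n (a + b) = Tr p n a + Tr p n b := by
  ext k
  simp only [coeff_Tr_s14, coeff_add]

theorem Tr_weightedHomogeneousComponent (g : MvPolynomial (Fin n) (ZMod p)) (d : ℕ) :
    Tr p n (weightedHomogeneousComponent lam (p * d + (p - 1) * ∑ i, lam i) g) =
      weightedHomogeneousComponent lam d (Tr p n g) := by
  ext k
  simp only [coeff_Tr_s14, coeff_weightedHomogeneousComponent, weight_traceExponent,
    Nat.add_right_cancel_iff, mul_right_inj' (NeZero.ne p)]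

theorem Tr_weightedHomogeneousComponent_eq_zero (g : MvPolynomial (Fin n) (ZMod p)) {D : ℕ}
    (hD : ∀ d, p * d + (p - 1) * ∑ i, lam i ≠ D) :
    Tr p n (weightedHomogeneousComponent lam D g) = 0 := by
  ext k
  simp only [coeff_Tr_s14, coeff_weightedHomogeneousComponent, weight_traceExponent, hD, if_false,
    coeff_zero]

theorem weightedTotalDegree_Tr_le {g : MvPolynomial (Fin n) (ZMod p)} {d : ℕ}
    (hg : weightedTotalDegree lam g ≤ p * d + (p - 1) * ∑ i, lam i) :
    weightedTotalDegree lam (Tr p n g) ≤ d := by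
  refine weightedTotalDegree_le_iff.2 fun k hk => ?_
  rw [coeff_Tr_s14] at hk
  have hweight := weightedTotalDegree_le_iff.1 hg _ hk
  rw [weight_traceExponent] at hweight
  exact Nat.le_of_mul_le_mul_left (Nat.le_of_add_le_add_right hweight) (NeZero.pos p)

theorem Tr_weightedHomogeneousComponent_mem_initIdeal
    {I : Ideal (MvPolynomial (Fin n) (ZMod p))} {g : MvPolynomial (Fin n) (ZMod p)} {D : ℕ}
    (hg : Tr p n g ∈ I) (hD : weightedTotalDegree lam g ≤ D) :
    Tr p n (weightedHomogeneousComponent lam D g) ∈ initIdeal lam I := by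
  by_cases hd : ∃ d, p * d + (p - 1) * ∑ i, lam i = D
  · obtain ⟨d, rfl⟩ := hd
    rw [Tr_weightedHomogeneousComponent]
    exact weightedHomogeneousComponent_mem_initIdeal hg (weightedTotalDegree_Tr_le hD)
  · rw [Tr_weightedHomogeneousComponent_eq_zero g (not_exists.1 hd)]
    exact zero_mem _

theorem Tr_weightedHomogeneousComponent_mul_mem_initIdeal
    {I : Ideal (MvPolynomial (Fin n) (ZMod p))} {F : MvPolynomial (Fin n) (ZMod p)} {D : ℕ}
    (hD : weightedTotalDegree lam F ≤ D) (hI : ∀ g ∈ I, Tr p n (F * g) ∈ I) :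
    ∀ h ∈ initIdeal lam I, Tr p n (weightedHomogeneousComponent lam D F * h) ∈ initIdeal lam I := by
  intro h hh
  refine initIdeal_induction_on
    (motive := fun h => Tr p n (weightedHomogeneousComponent lam D F * h) ∈ initIdeal lam I)
    hh ?zero (fun a b ha hb => ?add) fun g hg d hd => ?component
  case zero =>
    rw [mul_zero, Tr_zero]
    exact zero_mem _
  case add =>
    rw [mul_add, Tr_add]
    exact add_mem ha hb
  case component =>
    rw [← weightedHomogeneousComponent_mul_of_le hD hd]
    exact Tr_weightedHomogeneousComponent_mem_initIdeal (hI g hg)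
      (weightedTotalDegree_mul_le.trans (add_le_add hD hd))

theorem stmt_14_general (lam : Fin n → ℕ) (f : MvPolynomial (Fin n) (ZMod p))
    (I : Ideal (MvPolynomial (Fin n) (ZMod p))) (hI : ∀ g ∈ I, Tr p n (f ^ (p - 1) * g) ∈ I) :
    ∀ g ∈ initIdeal lam I, Tr p n (initForm lam f ^ (p - 1) * g) ∈ initIdeal lam I := by
  rw [initForm_eq_weightedHomogeneousComponent, ← weightedHomogeneousComponent_pow_of_le le_rfl]
  exact Tr_weightedHomogeneousComponent_mul_mem_initIdeal (weightedTotalDegree_pow_le _) hI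

end Trace

/-- suppose `deg f ≤ n`, `x₁⋯xₙ` appears in `init_λ(f)`, and
`Tr(f^{p−1}) = 1` (so both `g ↦ Tr(f^{p−1}·g)` and `g ↦ Tr((init_λ f)^{p−1}·g)` are
Frobenius splittings). If `I` is compatibly split by `g ↦ Tr(f^{p−1}·g)`, then
`init_λ(I)` is compatibly split by `g ↦ Tr((init_λ f)^{p−1}·g)`. -/
theorem stmt_14 {p : ℕ} (hp : p.Prime) {n : ℕ} (hn : 1 ≤ n) (lam : Fin n → ℕ)
    (f : MvPolynomial (Fin n) (ZMod p)) (hdeg : f.totalDegree ≤ n)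
    (hmem : (Finsupp.equivFunOnFinite.symm fun _ : Fin n => 1) ∈ f.support)
    (hmax : ∀ m ∈ f.support,
      wtOf lam m ≤ wtOf lam (Finsupp.equivFunOnFinite.symm fun _ : Fin n => 1))
    (htr : Tr p n (f ^ (p - 1)) = 1)
    (I : Ideal (MvPolynomial (Fin n) (ZMod p)))
    (hI : ∀ g ∈ I, Tr p n (f ^ (p - 1) * g) ∈ I) :
    ∀ g ∈ initIdeal lam I,
      Tr p n ((initForm lam f) ^ (p - 1) * g) ∈ initIdeal lam I := by
  have : NeZero p := ⟨hp.ne_zero⟩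
  exact stmt_14_general lam f I hI
end
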